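/- Let G be a finite simple graph and L a list assignment with |L(v)| ≥ 3 for every vertex v. Suppose G is not (L,1)*-colorable, but for every nonempty set S of vertices the induced subgraph G − S admits the restriction of L as an (L,1)*-coloring (i.e., every proper induced subgraph of G is (L,1)*-colorable). Then G contains no triangle whose vertices have degrees 3, 4, 4 in G, and G contains no 4-cycle whose vertices in cyclic order have degrees 3, 4, 3, 4 in G. -/

import Mathlib

/-- An `(L,1)*`-coloring of `G`: every vertex gets a color from its list, and
each vertex has at most one neighbor receiving its own color. -/
def IsL1StarColoring {V α : Type*} (G : SimpleGraph V) (L : V → Finset α)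
    (φ : V → α) : Prop :=
  (∀ v, φ v ∈ L v) ∧
    ∀ v u w, G.Adj v u → G.Adj v w → φ u = φ v → φ w = φ v → u = w

/-! A coloring `φ` of `G - S` extends to `G` as soon as `G[S]` can be colored from the lists left
over by `φ`, that is, from the colors of `L v` not used on the neighbors of `v` outside `S`. At most
`deg_G v - deg_{G[S]} v` colors are lost at `v`, so a bound `deg_G v ≤ |L v| + k` is inherited by
`G[S]` with its leftover lists. The triangle and the 4-cycle are therefore excluded by coloring a
graph with just three or four vertices.

*Triangle `xyz`, `deg x ≤ |L x|`, `deg y ≤ |L y| + 1`, `deg z ≤ |L z| + 1`.* The lists have sizes at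
least `2, 1, 1`, so `x` can be colored differently from `y`; then the three colors are not all
equal.

*4-cycle `xyzu`, `deg x ≤ |L x|`, `deg y ≤ |L y| + 1`, `deg z ≤ |L z|`, `deg u ≤ |L u| + 1`.* The
lists have sizes at least `2, 1, 2, 1`, and a chord adds one color at both of its ends. Hence `y`
and `u` can be colored, differently if they are adjacent, and then `x` differently from `y` and `z`
differently from `u`; if `x` and `z` are adjacent, their lists are long enough to avoid the colors
of both `y` and `u`. The edges with equal ends form a matching, contained in `{xz}` if `x` and `z`
are adjacent and in `{xu, yz}` otherwise.
-/

open Finset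

/-- `G` is `(L,1)*`-colorable: it admits an `(L,1)*`-coloring. -/
def IsL1StarColorable {V α : Type*} (G : SimpleGraph V) (L : V → Finset α) : Prop :=
  ∃ φ : V → α, IsL1StarColoring G L φ

section Extension

variable {V α : Type*} {G : SimpleGraph V} {L : V → Finset α} {S : Set V}

lemma IsL1StarColoring.isL1StarColorable_of_compl {φ : ↥Sᶜ → α} {ψ : S → α}
    (hφ : IsL1StarColoring (G.induce Sᶜ) (fun w => L w) φ)
    (hψ : IsL1StarColoring (G.induce S) (fun v => L v) ψ)
    (hne : ∀ (v : S) (w : ↥Sᶜ), G.Adj v w → φ w ≠ ψ v) : IsL1StarColorable G L := by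
  classical
  let χ : V → α := fun v => if h : v ∈ S then ψ ⟨v, h⟩ else φ ⟨v, h⟩
  have χ_in (v : S) : χ v = ψ v := dif_pos v.2
  have χ_out (w : ↥Sᶜ) : χ w = φ w := dif_neg w.2
  have same_side {v u : V} (hvu : G.Adj v u) (hχ : χ u = χ v) : u ∈ S ↔ v ∈ S := by
    by_cases hv : v ∈ S <;> by_cases hu : u ∈ S <;> simp only [hv, hu]
    · exact absurd (by rw [← χ_out, ← χ_in, hχ]) (hne ⟨v, hv⟩ ⟨u, hu⟩ hvu)
    · exact absurd (by rw [← χ_out, ← χ_in, hχ]) (hne ⟨u, hu⟩ ⟨v, hv⟩ hvu.symm)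
  refine ⟨χ, fun v => ?_, fun v u w hvu hvw hu hw => ?_⟩
  · by_cases hv : v ∈ S
    · exact χ_in ⟨v, hv⟩ ▸ hψ.1 ⟨v, hv⟩
    · exact χ_out ⟨v, hv⟩ ▸ hφ.1 ⟨v, hv⟩
  · have huS := same_side hvu hu
    have hwS := same_side hvw hw
    by_cases hv : v ∈ S
    · have := hψ.2 ⟨v, hv⟩ ⟨u, huS.2 hv⟩ ⟨w, hwS.2 hv⟩ hvu hvw
      simp only [← χ_in] at this
      exact congrArg Subtype.val (this hu hw)
    · have := hφ.2 ⟨v, hv⟩ ⟨u, mt huS.1 hv⟩ ⟨w, mt hwS.1 hv⟩ hvu hvw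
      simp only [← χ_out] at this
      exact congrArg Subtype.val (this hu hw)

open Classical in
/-- The list left over at `v ∈ S` by a coloring `φ` of `G - S`: the colors of `L v` that `φ` does
not use on the neighbors of `v` outside `S`. -/
noncomputable def residualList (G : SimpleGraph V) (L : V → Finset α) (φ : ↥Sᶜ → α) (v : S) :
    Finset α :=
  {c ∈ L v | ∀ w : ↥Sᶜ, G.Adj v w → φ w ≠ c}

lemma card_add_degree_induce_le_card_residualList_add [G.LocallyFinite]
    [(G.induce S).LocallyFinite] (φ : ↥Sᶜ → α) (v : S) :
    #(L v) + (G.induce S).degree v ≤ #(residualList G L φ v) + G.degree v := by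
  classical
  let insideNeighbors := ((G.induce S).neighborFinset v).map (.subtype (· ∈ S))
  have insideNeighbors_subset : insideNeighbors ⊆ G.neighborFinset v := fun w hw => by
    simp only [insideNeighbors, mem_map, SimpleGraph.mem_neighborFinset] at hw ⊢
    obtain ⟨u, hu, rfl⟩ := hw
    exact hu
  have card_outside :
      #(G.neighborFinset v \ insideNeighbors) + (G.induce S).degree v = G.degree v := by
    simpa [insideNeighbors] using card_sdiff_add_card_eq_card insideNeighbors_subset
  have card_lost :
      #{c ∈ L v | ¬ ∀ w : ↥Sᶜ, G.Adj v w → φ w ≠ c} ≤ #(G.neighborFinset v \ insideNeighbors) := by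
    refine card_le_card_of_forall_subsingleton (fun c w => ∃ h : w ∈ Sᶜ, φ ⟨w, h⟩ = c) ?_ ?_
    · intro c hc
      push Not at hc
      obtain ⟨-, w, hvw, hw⟩ := mem_filter.1 hc
      exact ⟨w, by simpa [insideNeighbors, hvw] using fun h => absurd h w.2, w.2, hw⟩
    · rintro w - c ⟨-, h, rfl⟩ c' ⟨-, h', rfl⟩
      rfl
  have card_split := card_filter_add_card_filter_not (s := L v)
    (fun c => ∀ w : ↥Sᶜ, G.Adj v w → φ w ≠ c)
  unfold residualList
  omega

lemma IsL1StarColorable.of_induce_compl [G.LocallyFinite] [(G.induce S).LocallyFinite]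
    (hcompl : IsL1StarColorable (G.induce Sᶜ) (fun w => L w))
    (hS : ∀ A : S → Finset α,
      (∀ (v : S) (k : ℕ), G.degree v ≤ #(L v) + k → (G.induce S).degree v ≤ #(A v) + k) →
        IsL1StarColorable (G.induce S) A) :
    IsL1StarColorable G L := by
  classical
  obtain ⟨φ, hφ⟩ := hcompl
  obtain ⟨ψ, hψmem, hψ⟩ := hS (residualList G L φ) fun v k hv => by
    have := card_add_degree_induce_le_card_residualList_add (G := G) (L := L) φ v
    omega
  have hψ' (v : S) := mem_filter.1 (hψmem v)
  exact hφ.isL1StarColorable_of_compl ⟨fun v => (hψ' v).1, hψ⟩ fun v => (hψ' v).2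

end Extension

section SmallGraphs

variable {W α : Type*} {H : SimpleGraph W} {A : W → Finset α} {x y z u : W}

lemma two_le_degree_of_adj [Fintype (H.neighborSet x)] (hy : H.Adj x y) (hz : H.Adj x z)
    (hyz : y ≠ z) : 2 ≤ H.degree x :=
  one_lt_card.2 ⟨y, by simpa using hy, z, by simpa using hz, hyz⟩

lemma three_le_degree_of_adj [Fintype (H.neighborSet x)] (hy : H.Adj x y) (hz : H.Adj x z)
    (hu : H.Adj x u) (hyz : y ≠ z) (hyu : y ≠ u) (hzu : z ≠ u) : 3 ≤ H.degree x :=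
  two_lt_card.2 ⟨y, by simpa using hy, z, by simpa using hz, u, by simpa using hu, hyz, hyu, hzu⟩

lemma isL1StarColorable_triangle [H.LocallyFinite] (hcover : ∀ w, w = x ∨ w = y ∨ w = z)
    (hxy : H.Adj x y) (hyz : H.Adj y z) (hxz : H.Adj x z) (hx : H.degree x ≤ #(A x))
    (hy : H.degree y ≤ #(A y) + 1) (hz : H.degree z ≤ #(A z) + 1) : IsL1StarColorable H A := by
  classical
  have degx := two_le_degree_of_adj hxy hxz hyz.ne
  have degy := two_le_degree_of_adj hxy.symm hyz hxz.ne
  have degz := two_le_degree_of_adj hxz.symm hyz.symm hxy.ne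
  obtain ⟨b, hb⟩ : (A y).Nonempty := card_pos.1 (by omega)
  obtain ⟨c, hc⟩ : (A z).Nonempty := card_pos.1 (by omega)
  obtain ⟨a, ha, hab⟩ := exists_mem_ne (show 1 < #(A x) by omega) b
  let φ : W → α := fun w => if w = x then a else if w = y then b else c
  have φ_ne : φ x ≠ φ y := by simpa [φ, hxy.ne'] using hab
  have := hxy.ne
  have := hyz.ne
  have := hxz.ne
  refine ⟨φ, fun w => by rcases hcover w with rfl | rfl | rfl <;> grind,
    fun v p q hvp hvq hp hq => ?_⟩
  have := hvp.ne
  have := hvq.ne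
  by_contra hpq
  have hcover' (w : W) : w = v ∨ w = p ∨ w = q := by
    grind [hcover v, hcover p, hcover q, hcover w]
  have φ_const (w : W) : φ w = φ v := by rcases hcover' w with rfl | rfl | rfl <;> simp only [*]
  exact φ_ne ((φ_const x).trans (φ_const y).symm)

lemma exists_fourCycle_selection [H.LocallyFinite] (hcover : ∀ w, w = x ∨ w = y ∨ w = z ∨ w = u)
    (hxy : H.Adj x y) (hyz : H.Adj y z) (hzu : H.Adj z u) (hux : H.Adj u x)
    (hxz : x ≠ z) (hyu : y ≠ u) (hx : H.degree x ≤ #(A x)) (hy : H.degree y ≤ #(A y) + 1)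
    (hz : H.degree z ≤ #(A z)) (hu : H.degree u ≤ #(A u) + 1) :
    ∃ φ : W → α, (∀ w, φ w ∈ A w) ∧ φ x ≠ φ y ∧ φ z ≠ φ u ∧ (H.Adj y u → φ y ≠ φ u) ∧
      (H.Adj x z → φ x ≠ φ u ∧ φ z ≠ φ y) := by
  classical
  have degx := two_le_degree_of_adj hxy hux.symm hyu
  have degy := two_le_degree_of_adj hxy.symm hyz hxz
  have degz := two_le_degree_of_adj hyz.symm hzu hyu
  have degu := two_le_degree_of_adj hux hzu.symm hxz
  obtain ⟨b, hb⟩ : (A u).Nonempty := card_pos.1 (by omega)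
  obtain ⟨a, ha, hab⟩ : ∃ a ∈ A y, H.Adj y u → a ≠ b := by
    by_cases h : H.Adj y u
    · have := three_le_degree_of_adj hxy.symm hyz h hxz hux.ne' hzu.ne
      obtain ⟨a, ha, hab⟩ := exists_mem_ne (show 1 < #(A y) by omega) b
      exact ⟨a, ha, fun _ => hab⟩
    · obtain ⟨a, ha⟩ : (A y).Nonempty := card_pos.1 (by omega)
      exact ⟨a, ha, fun h' => absurd h' h⟩
  obtain ⟨c, hc, e, he, hca, heb, hchord⟩ :
      ∃ c ∈ A x, ∃ e ∈ A z, c ≠ a ∧ e ≠ b ∧ (H.Adj x z → c ≠ b ∧ e ≠ a) := by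
    by_cases h : H.Adj x z
    · have := three_le_degree_of_adj hxy h hux.symm hyz.ne hyu hzu.ne
      have := three_le_degree_of_adj hyz.symm h.symm hzu hxy.ne' hyu hux.ne'
      have card_le : #{a, b} ≤ 2 := card_le_two
      obtain ⟨c, hc, hc'⟩ := exists_mem_notMem_of_card_lt_card (show #{a, b} < #(A x) by omega)
      obtain ⟨e, he, he'⟩ := exists_mem_notMem_of_card_lt_card (show #{a, b} < #(A z) by omega)
      exact ⟨c, hc, e, he, by grind⟩
    · obtain ⟨c, hc, hca⟩ := exists_mem_ne (show 1 < #(A x) by omega) a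
      obtain ⟨e, he, heb⟩ := exists_mem_ne (show 1 < #(A z) by omega) b
      exact ⟨c, hc, e, he, hca, heb, fun h' => absurd h' h⟩
  have := hxy.ne
  have := hyz.ne
  have := hzu.ne
  have := hux.ne
  exact ⟨fun w => if w = x then c else if w = y then a else if w = z then e else b,
    fun w => by rcases hcover w with rfl | rfl | rfl | rfl <;> grind, by grind⟩

lemma isL1StarColoring_of_partner {φ : W → α} (hmem : ∀ w, φ w ∈ A w) (partner : W → W)
    (hpartner : ∀ v w, H.Adj v w → φ w = φ v → w = partner v) : IsL1StarColoring H A φ :=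
  ⟨hmem, fun v p q hvp hvq hp hq => (hpartner v p hvp hp).trans (hpartner v q hvq hq).symm⟩

lemma isL1StarColorable_fourCycle [H.LocallyFinite]
    (hcover : ∀ w, w = x ∨ w = y ∨ w = z ∨ w = u)
    (hxy : H.Adj x y) (hyz : H.Adj y z) (hzu : H.Adj z u) (hux : H.Adj u x)
    (hxz : x ≠ z) (hyu : y ≠ u) (hx : H.degree x ≤ #(A x)) (hy : H.degree y ≤ #(A y) + 1)
    (hz : H.degree z ≤ #(A z)) (hu : H.degree u ≤ #(A u) + 1) : IsL1StarColorable H A := by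
  classical
  obtain ⟨φ, hmem, hφxy, hφzu, hφyu, hφxz⟩ :=
    exists_fourCycle_selection hcover hxy hyz hzu hux hxz hyu hx hy hz hu
  have := H.adj_comm y u
  have := H.adj_comm x z
  by_cases h : H.Adj x z
  · refine ⟨φ, isL1StarColoring_of_partner hmem (fun w => if w = x then z else x) ?_⟩
    intro v w hvw hφ
    have := hvw.ne
    grind [hcover v, hcover w]
  · refine ⟨φ, isL1StarColoring_of_partner hmem
      (fun w => if w = x then u else if w = u then x else if w = y then z else y) ?_⟩
    intro v w hvw hφ
    have := hvw.ne
    grind [hcover v, hcover w]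

end SmallGraphs

section Reducibility

variable {V α : Type*} {G : SimpleGraph V} [G.LocallyFinite] {L : V → Finset α} {x y z u : V}

lemma isL1StarColorable_of_triangle
    (hcompl : IsL1StarColorable (G.induce {x, y, z}ᶜ) (fun w => L w))
    (hxy : G.Adj x y) (hyz : G.Adj y z) (hxz : G.Adj x z) (hx : G.degree x ≤ #(L x))
    (hy : G.degree y ≤ #(L y) + 1) (hz : G.degree z ≤ #(L z) + 1) : IsL1StarColorable G L := by
  classical
  let S : Set V := {x, y, z}
  let x' : S := ⟨x, by simp [S]⟩
  let y' : S := ⟨y, by simp [S]⟩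
  let z' : S := ⟨z, by simp [S]⟩
  have : (G.induce S).LocallyFinite := fun v => Fintype.ofFinite _
  refine hcompl.of_induce_compl (S := S) fun A hA => ?_
  have hcover : ∀ w : S, w = x' ∨ w = y' ∨ w = z' := fun ⟨w, hw⟩ => by
    simpa [x', y', z', S, Subtype.ext_iff] using hw
  exact isL1StarColorable_triangle hcover hxy hyz hxz
    (hA x' 0 hx) (hA y' 1 hy) (hA z' 1 hz)

lemma isL1StarColorable_of_fourCycle
    (hcompl : IsL1StarColorable (G.induce {x, y, z, u}ᶜ) (fun w => L w))
    (hxy : G.Adj x y) (hyz : G.Adj y z) (hzu : G.Adj z u) (hux : G.Adj u x)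
    (hxz : x ≠ z) (hyu : y ≠ u) (hx : G.degree x ≤ #(L x)) (hy : G.degree y ≤ #(L y) + 1)
    (hz : G.degree z ≤ #(L z)) (hu : G.degree u ≤ #(L u) + 1) : IsL1StarColorable G L := by
  classical
  let S : Set V := {x, y, z, u}
  let x' : S := ⟨x, by simp [S]⟩
  let y' : S := ⟨y, by simp [S]⟩
  let z' : S := ⟨z, by simp [S]⟩
  let u' : S := ⟨u, by simp [S]⟩
  have : (G.induce S).LocallyFinite := fun v => Fintype.ofFinite _
  refine hcompl.of_induce_compl (S := S) fun A hA => ?_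
  have hcover : ∀ w : S, w = x' ∨ w = y' ∨ w = z' ∨ w = u' := fun ⟨w, hw⟩ => by
    simpa [x', y', z', u', S, Subtype.ext_iff] using hw
  exact isL1StarColorable_fourCycle hcover hxy hyz hzu hux
    (Subtype.coe_ne_coe.1 hxz) (Subtype.coe_ne_coe.1 hyu)
    (hA x' 0 hx) (hA y' 1 hy) (hA z' 0 hz) (hA u' 1 hu)

end Reducibility

theorem stmt_7_general {V α : Type*} (G : SimpleGraph V) [G.LocallyFinite] (L : V → Finset α)
    (hG : ¬ IsL1StarColorable G L)
    (hmin : ∀ S : Set V, S.Nonempty → IsL1StarColorable (G.induce Sᶜ) (fun w => L w)) :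
    (¬ ∃ x y z : V, G.Adj x y ∧ G.Adj y z ∧ G.Adj x z ∧
        G.degree x ≤ #(L x) ∧ G.degree y ≤ #(L y) + 1 ∧ G.degree z ≤ #(L z) + 1) ∧
      ¬ ∃ x y z u : V, G.Adj x y ∧ G.Adj y z ∧ G.Adj z u ∧ G.Adj u x ∧ x ≠ z ∧ y ≠ u ∧
        G.degree x ≤ #(L x) ∧ G.degree y ≤ #(L y) + 1 ∧
        G.degree z ≤ #(L z) ∧ G.degree u ≤ #(L u) + 1 := by
  constructor
  · rintro ⟨x, y, z, hxy, hyz, hxz, hx, hy, hz⟩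
    exact hG (isL1StarColorable_of_triangle (hmin _ ⟨x, by simp⟩) hxy hyz hxz hx hy hz)
  · rintro ⟨x, y, z, u, hxy, hyz, hzu, hux, hxz, hyu, hx, hy, hz, hu⟩
    exact hG (isL1StarColorable_of_fourCycle (hmin _ ⟨x, by simp⟩)
      hxy hyz hzu hux hxz hyu hx hy hz hu)

/-- If all lists have size at least 3, `G` is not `(L,1)*`-colorable, but every
proper induced subgraph of `G` is (with the restricted lists), then `G`
contains no triangle with vertex degrees `3, 4, 4` and no 4-cycle with vertex
degrees `3, 4, 3, 4` in cyclic order. -/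
theorem stmt_7 {V α : Type*} [Fintype V] [DecidableEq V]
    (G : SimpleGraph V) [DecidableRel G.Adj]
    (L : V → Finset α) (hL : ∀ v, 3 ≤ (L v).card)
    (hG : ¬ ∃ φ : V → α, IsL1StarColoring G L φ)
    (hmin : ∀ S : Set V, S.Nonempty →
      ∃ φ : ↥Sᶜ → α, IsL1StarColoring (G.induce Sᶜ) (fun w => L w.1) φ) :
    (¬ ∃ x y z : V, G.Adj x y ∧ G.Adj y z ∧ G.Adj x z ∧
        G.degree x = 3 ∧ G.degree y = 4 ∧ G.degree z = 4) ∧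
      ¬ ∃ x y z u : V, G.Adj x y ∧ G.Adj y z ∧ G.Adj z u ∧ G.Adj u x ∧
        x ≠ z ∧ y ≠ u ∧
        G.degree x = 3 ∧ G.degree y = 4 ∧ G.degree z = 3 ∧ G.degree u = 4 := by
  obtain ⟨htriangle, hcycle⟩ := stmt_7_general G L hG hmin
  exact ⟨by grind, by grind⟩
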